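/- Let N > 0. Then: (a) the family (N^{d/2} f_{N,n})_{n∈ℤ^d} is an orthonormal family in L²(ℝ^d); and (b) for every (a_n)_{n∈ℤ^d} ∈ ℓ²(ℤ^d), the family (a_n · f_{N,n})_{n∈ℤ^d} is summable in L²(ℝ^d) and ‖ Σ_{n∈ℤ^d} a_n f_{N,n} ‖ = N^{−d/2} ( Σ_{n∈ℤ^d} |a_n|² )^{1/2}. -/

import Mathlib

open MeasureTheory Filter Topology Metric ENNReal NNReal

noncomputable section

/-- `sinc` with value 1 at 0. -/
def sinc' (x : ℝ) : ℝ := if x = 0 then 1 else Real.sin x / x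

/-- The function `f_{N,n}(x) = ∏_j sin (π (N x_j - n_j)) / (π (N x_j - n_j))`. -/
def fN (d : ℕ) (N : ℝ) (n : Fin d → ℤ) (x : EuclideanSpace ℝ (Fin d)) : ℝ :=
  ∏ j, sinc' (Real.pi * (N * x j - n j))

/-- The lattice point `n / N` in `ℝ^d`. -/
def latticePt (d : ℕ) (N : ℝ) (n : Fin d → ℤ) : EuclideanSpace ℝ (Fin d) :=
  WithLp.toLp 2 fun j => (n j : ℝ) / N

/-- The heat solution at time `t > 0` with initial datum `u₀ ∈ L²(ℝ^d)`:
`u(t,x) = (4πt)^{-d/2} ∫ e^{-|x-y|²/(4t)} u₀(y) dy`. -/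
def heatSol (d : ℕ) (u₀ : EuclideanSpace ℝ (Fin d) → ℝ) (t : ℝ)
    (x : EuclideanSpace ℝ (Fin d)) : ℝ :=
  (4 * Real.pi * t) ^ (-(d : ℝ) / 2) * ∫ y, Real.exp (-‖x - y‖ ^ 2 / (4 * t)) * u₀ y

/-- The family `F` is summable in `L²(ℝ^d)` with sum `g`: the finite partial sums
converge to `g` in the `L²` norm along the filter of finite subsets of `ℤ^d`. -/
def HasSumL2 (d : ℕ) {V : Type} [NormedAddCommGroup V]
    (F : (Fin d → ℤ) → EuclideanSpace ℝ (Fin d) → V)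
    (g : EuclideanSpace ℝ (Fin d) → V) : Prop :=
  Tendsto (fun s : Finset (Fin d → ℤ) =>
    eLpNorm (fun x => g x - ∑ n ∈ s, F n x) 2 volume) atTop (𝓝 0)

/-- The closed cube `Q_r(0)` in `ℝ^d`, centered at the origin, of side length `2r`. -/
def Qcube (d : ℕ) (r : ℝ) : Set (EuclideanSpace ℝ (Fin d)) := {ξ | ∀ j, |ξ j| ≤ r}

/-- The truncated Fourier integral, with the paper's normalization
`(2π)^{-d/2} ∫_{|x| ≤ R} e^{-i x·ξ} f(x) dx`. -/
def truncFT (d : ℕ) (f : EuclideanSpace ℝ (Fin d) → ℂ) (R : ℝ)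
    (ξ : EuclideanSpace ℝ (Fin d)) : ℂ :=
  (((2 * Real.pi) ^ (-(d : ℝ) / 2) : ℝ) : ℂ) *
    ∫ x in closedBall (0 : EuclideanSpace ℝ (Fin d)) R,
      Complex.exp (-(Complex.I * ((inner ℝ x ξ : ℝ) : ℂ))) * f x

/-- `fhat` is the Fourier transform of `f ∈ L²(ℝ^d)` in the `L²` (Plancherel) sense:
`fhat ∈ L²` and the Fourier integrals of the truncations of `f` converge to `fhat`
in the `L²` norm. -/
def IsL2Fourier (d : ℕ) (f fhat : EuclideanSpace ℝ (Fin d) → ℂ) : Prop :=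
  MemLp fhat 2 volume ∧
    Tendsto (fun R : ℝ => eLpNorm (fun ξ => fhat ξ - truncFT d f R ξ) 2 volume)
      atTop (𝓝 0)

/-- The `L²(ℝ^d)` norm of a function, as a real number. -/
def l2norm (d : ℕ) {V : Type} [NormedAddCommGroup V]
    (f : EuclideanSpace ℝ (Fin d) → V) : ℝ :=
  (eLpNorm f 2 volume).toReal

/-!
The function `sinc (π (x - t))` is the Fourier transform of the wave `e^{2πitξ}` cut off to the band
`(-1/2, 1/2]`, so Plancherel's theorem turns the inner product of two of its translates by `s` and
`t` into the integral of `e^{2πi(s-t)ξ}` over the band, which is `sinc (π (s - t))` and vanishes for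
distinct integers. Rescaling by `N` and Fubini give the orthogonality of the `f_{N,n}`, and the
series in part (b) is the image of a sequence in `ℓ²` under the isometry into `L²` that an
orthonormal family induces.
-/

section Plancherel

open scoped FourierTransform SchwartzMap InnerProductSpace ContDiff

lemma inner_toLp_two {𝕜 α E : Type*} [RCLike 𝕜] [MeasurableSpace α] {μ : Measure α}
    [NormedAddCommGroup E] [InnerProductSpace 𝕜 E] {f g : α → E}
    (hf : MemLp f 2 μ) (hg : MemLp g 2 μ) :
    ⟪hf.toLp f, hg.toLp g⟫_𝕜 = ∫ x, ⟪f x, g x⟫_𝕜 ∂μ := by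
  rw [L2.inner_def]
  refine integral_congr_ae ?_
  filter_upwards [hf.coeFn_toLp, hg.coeFn_toLp] with x hfx hgx
  rw [hfx, hgx]

variable {V : Type*} [NormedAddCommGroup V] [InnerProductSpace ℝ V] [FiniteDimensional ℝ V]
  [MeasurableSpace V] [BorelSpace V]

lemma integral_schwartz_smul_fourier {E : Type*} [NormedAddCommGroup E] [NormedSpace ℂ E]
    [CompleteSpace E] {f : V → E} (φ : 𝓢(V, ℂ)) (hf : Integrable f) :
    ∫ ξ, φ ξ • 𝓕 f ξ = ∫ x, 𝓕 φ x • f x := by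
  simpa only [flip_innerₗ, SchwartzMap.fourier_coe] using!
    (VectorFourier.integral_fourierIntegral_smul_eq_flip (L := innerₗ V)
      Real.continuous_fourierChar continuous_inner φ.integrable hf).symm

variable {E : Type*} [NormedAddCommGroup E] [InnerProductSpace ℂ E] [CompleteSpace E] {f g : V → E}

theorem fourier_toLp_two_ae_eq (hf : Integrable f) (hf₂ : MemLp f 2) :
    (𝓕 (hf₂.toLp f) : Lp E 2 (volume : Measure V)) =ᵐ[volume] 𝓕 f := by
  have hcont : Continuous (𝓕 f) :=
    VectorFourier.fourierIntegral_continuous Real.continuous_fourierChar continuous_inner hf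
  refine ae_eq_of_integral_contDiff_smul_eq ((Lp.memLp _).locallyIntegrable one_le_two)
    hcont.locallyIntegrable fun φ hφ hφ_supp => ?_
  have hφ_supp' : HasCompactSupport (Complex.ofRealCLM ∘ φ) := hφ_supp.comp_left rfl
  have hφ' : ContDiff ℝ ∞ (Complex.ofRealCLM ∘ φ) := by fun_prop
  let ψ : 𝓢(V, ℂ) := hφ_supp'.toSchwartzMap hφ'
  calc ∫ ξ, φ ξ • (𝓕 (hf₂.toLp f) : Lp E 2 (volume : Measure V)) ξ
    _ = Lp.toTemperedDistribution (𝓕 (hf₂.toLp f)) ψ := by simp [ψ]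
    _ = Lp.toTemperedDistribution (hf₂.toLp f) (𝓕 ψ) := by
      rw [← Lp.fourier_toTemperedDistribution_eq, TemperedDistribution.fourier_apply]
    _ = ∫ x, 𝓕 ψ x • f x := by
      rw [Lp.toTemperedDistribution_apply]
      refine integral_congr_ae ?_
      filter_upwards [hf₂.coeFn_toLp] with x hx
      rw [hx]
    _ = ∫ ξ, ψ ξ • 𝓕 f ξ := (integral_schwartz_smul_fourier ψ hf).symm
    _ = ∫ ξ, φ ξ • 𝓕 f ξ := by simp [ψ]

theorem memLp_two_fourier (hf : Integrable f) (hf₂ : MemLp f 2) : MemLp (𝓕 f) 2 :=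
  (memLp_congr_ae (fourier_toLp_two_ae_eq hf hf₂)).1 (Lp.memLp _)

theorem integral_inner_fourier_fourier (hf : Integrable f) (hf₂ : MemLp f 2)
    (hg : Integrable g) (hg₂ : MemLp g 2) :
    ∫ ξ, ⟪𝓕 f ξ, 𝓕 g ξ⟫_ℂ = ∫ x, ⟪f x, g x⟫_ℂ := by
  rw [← inner_toLp_two hf₂ hg₂, ← Lp.inner_fourier_eq, L2.inner_def]
  refine integral_congr_ae ?_
  filter_upwards [fourier_toLp_two_ae_eq hf hf₂, fourier_toLp_two_ae_eq hg hg₂] with ξ hfξ hgξ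
  rw [hfξ, hgξ]

end Plancherel

section Sinc

open scoped FourierTransform Real InnerProductSpace

/-- The wave `e^{2πitξ}` restricted to the frequency band `(-1/2, 1/2]`, whose Fourier transform is
the translate `sinc (π (x - t))`. -/
def bandWave (t : ℝ) : ℝ → ℂ :=
  (Set.Ioc (-(1 / 2)) (1 / 2)).indicator fun ξ => (𝐞 (t * ξ) : ℂ)

lemma fourierChar_smul_bandWave (s t ξ : ℝ) : 𝐞 (s * ξ) • bandWave t ξ = bandWave (s + t) ξ := by
  simp only [bandWave, Set.indicator_apply, smul_ite, smul_zero, Circle.smul_def, smul_eq_mul,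
    add_mul, AddChar.map_add_eq_mul, Circle.coe_mul]

lemma inner_bandWave (s t ξ : ℝ) : ⟪bandWave s ξ, bandWave t ξ⟫_ℂ = bandWave (t - s) ξ := by
  by_cases hξ : ξ ∈ Set.Ioc (-(1 / 2) : ℝ) (1 / 2)
  · simp only [bandWave, Set.indicator_of_mem hξ, RCLike.inner_apply, ← Circle.coe_inv_eq_conj,
      ← AddChar.map_neg_eq_inv, ← Circle.coe_mul, ← AddChar.map_add_eq_mul]
    ring_nf
  · simp only [bandWave, Set.indicator_of_notMem hξ, inner_zero_left]

lemma memLp_bandWave (t : ℝ) (p : ℝ≥0∞) : MemLp (bandWave t) p :=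
  (memLp_indicator_iff_restrict measurableSet_Ioc).2 <|
    MemLp.of_bound (by fun_prop) 1 (.of_forall fun ξ => (Circle.norm_coe _).le)

lemma integrable_bandWave (t : ℝ) : Integrable (bandWave t) :=
  memLp_one_iff_integrable.1 (memLp_bandWave t 1)

lemma integral_bandWave (t : ℝ) : ∫ ξ, bandWave t ξ = Real.sinc (π * t) := by
  rw [bandWave, integral_indicator measurableSet_Ioc,
    ← intervalIntegral.integral_of_le (by norm_num)]
  obtain rfl | ht := eq_or_ne t 0
  · norm_num
  have hexp := intervalIntegral.integral_comp_mul_left (a := -(1 / 2)) (b := 1 / 2)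
    (fun u : ℝ => Complex.exp (u * Complex.I)) (c := 2 * π * t) (by positivity)
  have hb : 2 * π * t * (1 / 2) = π * t := by ring
  have ha : 2 * π * t * (-(1 / 2)) = -(π * t) := by ring
  rw [ha, hb, integral_exp_mul_I_eq_sinc, Complex.real_smul] at hexp
  simp only [Real.fourierChar_apply, ← mul_assoc]
  rw [hexp]
  have htc : (t : ℂ) ≠ 0 := Complex.ofReal_ne_zero.2 ht
  push_cast
  field_simp

lemma fourier_bandWave (t x : ℝ) : 𝓕 (bandWave t) x = Real.sinc (π * (x - t)) := by
  simp only [Real.fourier_real_eq, mul_comm _ x, ← neg_mul, fourierChar_smul_bandWave]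
  rw [integral_bandWave, ← Real.sinc_neg]
  ring_nf

lemma memLp_sinc (t : ℝ) : MemLp (fun x => Real.sinc (π * (x - t))) 2 := by
  have h := memLp_two_fourier (integrable_bandWave t) (memLp_bandWave t 2)
  simpa only [funext (fourier_bandWave t), RCLike.ofReal_re] using! h.re

lemma integral_sinc_mul_sinc (s t : ℝ) :
    ∫ x, Real.sinc (π * (x - s)) * Real.sinc (π * (x - t)) = Real.sinc (π * (s - t)) := by
  have h := integral_inner_fourier_fourier (integrable_bandWave t)
    (memLp_bandWave t 2) (integrable_bandWave s) (memLp_bandWave s 2)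
  simp only [inner_bandWave, integral_bandWave] at h
  simp only [fourier_bandWave, RCLike.inner_apply, Complex.conj_ofReal] at h
  exact_mod_cast h

lemma integrable_sinc_mul_sinc_comp_mul_left {N : ℝ} (hN : N ≠ 0) (s t : ℝ) :
    Integrable fun x => Real.sinc (π * (N * x - s)) * Real.sinc (π * (N * x - t)) :=
  ((memLp_sinc s).integrable_mul (memLp_sinc t)).comp_mul_left' hN

lemma integral_sinc_mul_sinc_comp_mul_left (N s t : ℝ) :
    ∫ x, Real.sinc (π * (N * x - s)) * Real.sinc (π * (N * x - t)) =
      |N⁻¹| * Real.sinc (π * (s - t)) := by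
  rw [Measure.integral_comp_mul_left
    (fun y => Real.sinc (π * (y - s)) * Real.sinc (π * (y - t))), integral_sinc_mul_sinc,
    smul_eq_mul]

lemma sinc_pi_mul_intCast_sub (n m : ℤ) :
    Real.sinc (π * (n - m)) = if n = m then 1 else 0 := by
  split_ifs with h
  · rw [h, sub_self, mul_zero, Real.sinc_zero]
  · have hsub : (n - m : ℝ) ≠ 0 := sub_ne_zero.2 (Int.cast_injective.ne h)
    rw [Real.sinc_of_ne_zero (mul_ne_zero Real.pi_ne_zero hsub), ← Int.cast_sub, mul_comm π,
      Real.sin_int_mul_pi, zero_div]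

end Sinc

section EuclideanProduct

variable {ι 𝕜 : Type*} [Fintype ι] [RCLike 𝕜] {g : ι → ℝ → 𝕜}

lemma integrable_euclideanSpace_prod (hg : ∀ i, Integrable (g i)) :
    Integrable fun x : EuclideanSpace ℝ ι => ∏ i, g i (x i) := by
  rw [← (PiLp.volume_preserving_toLp ι).integrable_comp_emb
    (MeasurableEquiv.toLp 2 _).measurableEmbedding]
  exact Integrable.fintype_prod hg

variable (g) in
lemma integral_euclideanSpace_prod :
    ∫ x : EuclideanSpace ℝ ι, ∏ i, g i (x i) = ∏ i, ∫ y, g i y := by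
  rw [← (PiLp.volume_preserving_toLp ι).integral_comp
    (MeasurableEquiv.toLp 2 _).measurableEmbedding]
  exact integral_fintype_prod_volume_eq_prod g

end EuclideanProduct

section CardinalSeries

open scoped Real

variable {d : ℕ} {N : ℝ}

lemma fN_eq_prod_sinc (N : ℝ) (n : Fin d → ℤ) (x : EuclideanSpace ℝ (Fin d)) :
    fN d N n x = ∏ j, Real.sinc (π * (N * x j - n j)) := by
  simp only [fN, sinc', Real.sinc]

lemma fN_mul_fN (N : ℝ) (n m : Fin d → ℤ) (x : EuclideanSpace ℝ (Fin d)) :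
    fN d N n x * fN d N m x =
      ∏ j, Real.sinc (π * (N * x j - n j)) * Real.sinc (π * (N * x j - m j)) := by
  rw [fN_eq_prod_sinc, fN_eq_prod_sinc, Finset.prod_mul_distrib]

lemma memLp_fN (hN : N ≠ 0) (n : Fin d → ℤ) : MemLp (fN d N n) 2 := by
  have hcont : Continuous (fN d N n) := by
    simp only [funext (fN_eq_prod_sinc N n)]
    fun_prop
  rw [memLp_two_iff_integrable_sq hcont.aestronglyMeasurable]
  simp only [sq, fN_mul_fN]
  exact integrable_euclideanSpace_prod fun j =>
    integrable_sinc_mul_sinc_comp_mul_left hN (n j) (n j)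

lemma integral_fN_mul_fN (N : ℝ) (n m : Fin d → ℤ) :
    ∫ x, fN d N n x * fN d N m x = if n = m then |N⁻¹| ^ d else 0 := by
  simp only [fN_mul_fN]
  rw [integral_euclideanSpace_prod
    fun j y => Real.sinc (π * (N * y - n j)) * Real.sinc (π * (N * y - m j))]
  simp only [integral_sinc_mul_sinc_comp_mul_left, sinc_pi_mul_intCast_sub]
  split_ifs with h
  · simp [h]
  · obtain ⟨j, hj⟩ := Function.ne_iff.1 h
    exact Finset.prod_eq_zero (Finset.mem_univ j) (by rw [if_neg hj, mul_zero])

lemma integral_normalized_fN_mul_fN (hN : 0 < N) (n m : Fin d → ℤ) :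
    ∫ x, (N ^ ((d : ℝ) / 2) * fN d N n x) * (N ^ ((d : ℝ) / 2) * fN d N m x) =
      if n = m then 1 else 0 := by
  have hnormalize : N ^ ((d : ℝ) / 2) * N ^ ((d : ℝ) / 2) * |N⁻¹| ^ d = 1 := by
    rw [← Real.rpow_add hN, add_halves, Real.rpow_natCast, abs_of_pos (inv_pos.2 hN), ← mul_pow,
      mul_inv_cancel₀ hN.ne', one_pow]
  calc ∫ x, (N ^ ((d : ℝ) / 2) * fN d N n x) * (N ^ ((d : ℝ) / 2) * fN d N m x)
    _ = ∫ x, N ^ ((d : ℝ) / 2) * N ^ ((d : ℝ) / 2) * (fN d N n x * fN d N m x) := by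
      congr! 2 with x
      ring
    _ = if n = m then 1 else 0 := by
      rw [integral_const_mul, integral_fN_mul_fN, mul_ite, mul_zero, hnormalize]

end CardinalSeries

section OrthonormalSeries

open scoped InnerProductSpace

lemma orthonormal_toLp {𝕜 α E ι : Type*} [RCLike 𝕜] [MeasurableSpace α] {μ : Measure α}
    [NormedAddCommGroup E] [InnerProductSpace 𝕜 E] [DecidableEq ι] {φ : ι → α → E}
    (hφ : ∀ i, MemLp (φ i) 2 μ)
    (horth : ∀ i j, ∫ x, ⟪φ i x, φ j x⟫_𝕜 ∂μ = if i = j then 1 else 0) :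
    Orthonormal 𝕜 fun i => (hφ i).toLp (φ i) :=
  orthonormal_iff_ite.2 fun i j => (inner_toLp_two (hφ i) (hφ j)).trans (horth i j)

lemma exists_hasSum_smul_of_orthonormal {𝕜 ι H : Type*} [RCLike 𝕜] [NormedAddCommGroup H]
    [InnerProductSpace 𝕜 H] [CompleteSpace H] {v : ι → H} (hv : Orthonormal 𝕜 v) {b : ι → 𝕜}
    (hb : Summable fun i => ‖b i‖ ^ 2) :
    ∃ S : H, HasSum (fun i => b i • v i) S ∧ ‖S‖ = √(∑' i, ‖b i‖ ^ 2) := by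
  let b' : lp (fun _ : ι => 𝕜) 2 := ⟨b, memℓp_gen (by simpa using hb)⟩
  refine ⟨hv.orthogonalFamily.linearIsometry b',
    by simpa using! hv.orthogonalFamily.hasSum_linearIsometry b', ?_⟩
  rw [LinearIsometry.norm_map, lp.norm_eq_tsum_rpow (by simp), Real.sqrt_eq_rpow]
  simp [b']

variable {d : ℕ} {V : Type} [NormedAddCommGroup V]

lemma hasSumL2_of_hasSum_toLp {F : (Fin d → ℤ) → EuclideanSpace ℝ (Fin d) → V}
    (hF : ∀ n, MemLp (F n) 2) {S : Lp V 2 (volume : Measure (EuclideanSpace ℝ (Fin d)))}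
    (hS : HasSum (fun n => (hF n).toLp (F n)) S) : HasSumL2 d F S := by
  refine (tendsto_iff_edist_tendsto_0.1 hS).congr fun s => ?_
  rw [edist_comm, Lp.edist_def]
  refine eLpNorm_congr_ae ?_
  filter_upwards [Lp.coeFn_fun_finsetSum s fun n => (hF n).toLp (F n),
    ae_all_iff.2 fun n => (hF n).coeFn_toLp] with x hsum hterm
  simp only [Pi.sub_apply, hsum, hterm]

lemma exists_hasSumL2_of_orthonormal {𝕜 : Type*} [RCLike 𝕜] [InnerProductSpace 𝕜 V]
    [CompleteSpace V] {φ : (Fin d → ℤ) → EuclideanSpace ℝ (Fin d) → V}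
    (hφ : ∀ n, MemLp (φ n) 2)
    (horth : ∀ n m, ∫ x, ⟪φ n x, φ m x⟫_𝕜 = if n = m then 1 else 0)
    {b : (Fin d → ℤ) → 𝕜} (hb : Summable fun n => ‖b n‖ ^ 2) :
    ∃ S : EuclideanSpace ℝ (Fin d) → V, MemLp S 2 ∧ HasSumL2 d (fun n x => b n • φ n x) S ∧
      l2norm d S = √(∑' n, ‖b n‖ ^ 2) := by
  obtain ⟨S, hS, hnorm⟩ := exists_hasSum_smul_of_orthonormal (orthonormal_toLp hφ horth) hb
  refine ⟨S, Lp.memLp S, hasSumL2_of_hasSum_toLp (fun n => (hφ n).const_smul (b n)) hS, ?_⟩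
  rw [← hnorm, l2norm, Lp.norm_def]

end OrthonormalSeries

/-- Properties of the family `(f_{N,n})_{n ∈ ℤ^d}`: (a) `(N^{d/2} f_{N,n})_{n ∈ ℤ^d}` is an
orthonormal family in `L²(ℝ^d)`; (b) for every `(a_n) ∈ ℓ²(ℤ^d)` the family
`(a_n f_{N,n})_{n ∈ ℤ^d}` is summable in `L²(ℝ^d)` and
`‖Σ_n a_n f_{N,n}‖ = N^{-d/2} (Σ_n |a_n|²)^{1/2}`. -/
theorem statement19 (d : ℕ) (hd : 0 < d) (N : ℝ) (hN : 0 < N) :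
    ((∀ n : Fin d → ℤ, MemLp (fN d N n) 2 volume) ∧
      ∀ n m : Fin d → ℤ,
        ∫ x, (N ^ ((d : ℝ) / 2) * fN d N n x) * (N ^ ((d : ℝ) / 2) * fN d N m x) =
          if n = m then 1 else 0) ∧
    ∀ a : (Fin d → ℤ) → ℝ, Summable (fun n => (a n) ^ 2) →
      ∃ S : EuclideanSpace ℝ (Fin d) → ℝ, MemLp S 2 volume ∧
        HasSumL2 d (fun n x => a n * fN d N n x) S ∧
        l2norm d S = N ^ (-(d : ℝ) / 2) * Real.sqrt (∑' n, (a n) ^ 2) := by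
  have hφ (n : Fin d → ℤ) : MemLp (fun x => N ^ ((d : ℝ) / 2) * fN d N n x) 2 :=
    (memLp_fN hN.ne' n).const_mul _
  have horth := integral_normalized_fN_mul_fN (d := d) hN
  refine ⟨⟨memLp_fN hN.ne', horth⟩, fun a ha => ?_⟩
  have hcancel (n : Fin d → ℤ) (x : EuclideanSpace ℝ (Fin d)) :
      N ^ (-(d : ℝ) / 2) * a n * (N ^ ((d : ℝ) / 2) * fN d N n x) = a n * fN d N n x := by
    rw [mul_mul_mul_comm, ← Real.rpow_add hN, neg_div, neg_add_cancel, Real.rpow_zero, one_mul]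
  have hnorm_sq (n : Fin d → ℤ) :
      ‖N ^ (-(d : ℝ) / 2) * a n‖ ^ 2 = (N ^ (-(d : ℝ) / 2)) ^ 2 * a n ^ 2 := by
    rw [Real.norm_eq_abs, sq_abs, mul_pow]
  obtain ⟨S, hS_memLp, hS_sum, hS_norm⟩ := exists_hasSumL2_of_orthonormal (𝕜 := ℝ) hφ
    (fun n m => by simpa only [RCLike.inner_apply', conj_trivial] using horth n m)
    (b := fun n => N ^ (-(d : ℝ) / 2) * a n) (by simpa only [hnorm_sq] using ha.mul_left _)
  refine ⟨S, hS_memLp, ?_, ?_⟩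
  · simpa only [smul_eq_mul, hcancel] using hS_sum
  · rw [hS_norm]
    simp only [hnorm_sq]
    rw [_root_.tsum_mul_left, Real.sqrt_mul (sq_nonneg _), Real.sqrt_sq (by positivity)]
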